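/- For every ℓ ≥ 1 there exist a pushdown automaton A with 3 states and 2 stack symbols and ℓ deterministic finite automata A_1, ..., A_ℓ, each with O(ℓ) states, over a common alphabet containing a sub-alphabet Γ₂, such that every word in L(A) ∩ L(A_1) ∩ ⋯ ∩ L(A_ℓ), when projected to Γ₂, is exactly a word in Γ₂ of length 2^{2^ℓ}, and such a word exists. -/

import Mathlib

/-- A stack operation of a pushdown automaton. -/
inductive StackOp (Γ : Type*) where
  | push (γ : Γ)
  | pop (γ : Γ)
  | nop

/-- The effect of a stack operation: `op.apply s s'` means performing `op`
on stack `s` yields stack `s'`. -/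
def StackOp.apply {Γ : Type*} : StackOp Γ → List Γ → List Γ → Prop
  | .push γ, s, s' => s' = γ :: s
  | .pop γ, s, s' => s = γ :: s'
  | .nop, s, s' => s' = s

/-- A pushdown automaton with states `Q`, stack symbols `Γ` and input alphabet `σ`.
Transitions read a letter or `ε` (`Option σ`) and perform one stack operation. -/
structure PDA (Q Γ σ : Type*) where
  trans : Set (Q × Option σ × StackOp Γ × Q)
  start : Q
  final : Set Q

/-- `P.Steps c w c' h` : there is a run of `P` from configuration `c` to `c'`
reading the word `w`, whose maximal stack height (over all configurations
of the run, endpoints included) is `h`. -/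
inductive PDA.Steps {Q Γ σ : Type*} (P : PDA Q Γ σ) :
    Q × List Γ → List σ → Q × List Γ → ℕ → Prop where
  | refl (c : Q × List Γ) : PDA.Steps P c [] c c.2.length
  | step {q q' : Q} {a : Option σ} {op : StackOp Γ} {s s' : List Γ}
      {w : List σ} {c : Q × List Γ} {h : ℕ} :
      (q, a, op, q') ∈ P.trans → op.apply s s' →
      PDA.Steps P (q', s') w c h →
      PDA.Steps P (q, s) (a.toList ++ w) c (max s.length h)

/-- The language of a PDA: acceptance by final state and empty stack,
starting from the initial state with empty stack. -/
def PDA.language {Q Γ σ : Type*} (P : PDA Q Γ σ) : Set (List σ) :=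
  {w | ∃ f ∈ P.final, ∃ h, P.Steps (P.start, []) w (f, []) h}
/-- The alphabet `{0,1} ∪ {inc, dec} ∪ Γ₂`. -/
inductive CtrSym (Γ : Type*) where
  | bit (b : Bool)
  | inc
  | dec
  | letter (g : Γ)
deriving DecidableEq

/-- Value of an `ℓ`-bit string, most significant bit first. -/
def bitsVal (bs : List Bool) : ℤ :=
  bs.foldl (fun acc b => 2 * acc + (if b then 1 else 0)) 0

/-- The operators: `inc` increments, `dec` decrements, letters of `Γ₂` keep
the value unchanged. (`bit` is not an operator.) -/
def CtrSym.isOp {Γ : Type*} : CtrSym Γ → Prop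
  | .bit _ => False
  | _ => True

/-- Application of an operator to a value. -/
def CtrSym.applyOp {Γ : Type*} : CtrSym Γ → ℤ → ℤ
  | .inc, v => v + 1
  | .dec, v => v - 1
  | _, v => v

/-- `ValidSeq ℓ prev l` : the sequence of (operator, ℓ-bit number) pairs `l` is a
valid counting sequence starting from the previous ℓ-bit number `prev`, where each
number is congruent modulo `2^ℓ` to the operator applied to the previous one. -/
def ValidSeq {Γ : Type*} (ℓ : ℕ) : List Bool → List (CtrSym Γ × List Bool) → Prop
  | _, [] => True
  | prev, (o, n) :: rest =>
      o.isOp ∧ n.length = ℓ ∧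
      bitsVal n % (2 ^ ℓ : ℤ) = o.applyOp (bitsVal prev) % (2 ^ ℓ : ℤ) ∧
      ValidSeq ℓ n rest

/-- The language `L_ℓ` of alternating sequences `n₀ o₁ n₁ o₂ n₂ ⋯ o_k n_k` of ℓ-bit
numbers and operators, where each operator applied to the previous number gives
the next number modulo `2^ℓ`. -/
def LCtr (Γ : Type*) (ℓ : ℕ) : Set (List (CtrSym Γ)) :=
  {w | ∃ (n₀ : List Bool) (rest : List (CtrSym Γ × List Bool)),
    n₀.length = ℓ ∧ ValidSeq ℓ n₀ rest ∧
    w = n₀.map CtrSym.bit ++ (rest.map fun p => p.1 :: p.2.map CtrSym.bit).flatten}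

/-- Projection of a word over `Γ₂ ∪ {0,1,inc,dec}` to the sub-alphabet `Γ₂`. -/
def projLetters {Γ : Type*} (w : List (CtrSym Γ)) : List Γ :=
  w.filterMap fun s => match s with
    | .letter g => some g
    | _ => none

/-!
The words are binary counter traces: every operator is followed by the `ℓ` bits of the new counter
value, and the `i`-th automaton is only responsible for bit `i`. Incrementing flips bit `i` exactly
when all lower bits are `1`, and decrementing flips it exactly when all lower bits are `0`, so it is
enough to remember the position in the current block, bit `i`, and two flags about the bits below
`i`: `O(ℓ)` states. The pushdown automaton walks through a binary tree, pushing with `inc` and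
popping with `dec`, so that its stack height is the counter value. Hence the tree cannot be deeper
than `2^ℓ - 1`, and as letters can only be read at this maximal height, all its branches have
exactly this depth. Each of the `2^(2^ℓ - 1)` leaves contributes two letters.
-/

section DFA

variable {α σ τ ι : Type*}

theorem exists_dfa_accepts_eq_of_injective {f : σ → τ} (hf : f.Injective) (M : DFA α σ) :
    ∃ M' : DFA α τ, M'.accepts = M.accepts := by
  have : Nonempty σ := ⟨M.start⟩
  let M' : DFA α τ :=
    { step := fun t a => f (M.step (f.invFun t) a)
      start := f M.start
      accept := f.invFun ⁻¹' M.accept }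
  have evalFrom_eq (w : List α) : ∀ s, M'.evalFrom (f s) w = f (M.evalFrom s w) := by
    induction w with
    | nil => exact fun s => rfl
    | cons a w ih =>
      intro s
      rw [DFA.evalFrom_cons, DFA.evalFrom_cons, ← ih]
      simp only [M', Function.leftInverse_invFun hf s]
  refine ⟨M', Set.ext fun w => ?_⟩
  change f.invFun (M'.evalFrom (f M.start) w) ∈ M.accept ↔ M.evalFrom M.start w ∈ M.accept
  rw [evalFrom_eq, Function.leftInverse_invFun hf]

theorem exists_dfa_fin_accepts_eq [Fintype σ] {n : ℕ} (M : DFA α σ) (h : Fintype.card σ ≤ n) :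
    ∃ M' : DFA α (Fin n), M'.accepts = M.accepts := by
  obtain ⟨f⟩ := Function.Embedding.nonempty_of_card_le (h.trans_eq (Fintype.card_fin n).symm)
  exact exists_dfa_accepts_eq_of_injective f.injective M

/-- The complete automaton of a partial transition function: `none` is a rejecting sink. -/
def totalDFA (step : σ → α → Option σ) (start : σ) (accept : Set σ) : DFA α (Option σ) where
  step s a := s.bind (step · a)
  start := some start
  accept := some '' accept

theorem totalDFA_evalFrom_none (step : σ → α → Option σ) (start : σ) (accept : Set σ)
    (w : List α) : (totalDFA step start accept).evalFrom none w = none := by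
  induction w with
  | nil => rfl
  | cons _ _ ih => exact ih

theorem forall_cons_mem_acceptsFrom_totalDFA_iff {step : ι → σ → α → Option σ} {start s s' : ι → σ}
    {accept : Set σ} {a : α} {w : List α} {p : Prop}
    (hlive : p → ∀ i, step i (s i) a = some (s' i)) (hdead : ¬p → ∃ i, step i (s i) a = none) :
    (∀ i, a :: w ∈ (totalDFA (step i) (start i) accept).acceptsFrom (some (s i))) ↔
      p ∧ ∀ i, w ∈ (totalDFA (step i) (start i) accept).acceptsFrom (some (s' i)) := by
  have cons_mem_iff (i : ι) :
      a :: w ∈ (totalDFA (step i) (start i) accept).acceptsFrom (some (s i)) ↔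
        w ∈ (totalDFA (step i) (start i) accept).acceptsFrom (step i (s i) a) := Iff.rfl
  simp only [cons_mem_iff]
  by_cases hp : p
  · simp only [hlive hp, hp, true_and]
  · obtain ⟨i, hi⟩ := hdead hp
    refine iff_of_false (fun h => ?_) (fun h => hp h.1)
    have := h i
    rw [hi, DFA.mem_acceptsFrom, totalDFA_evalFrom_none] at this
    simp [totalDFA] at this

end DFA

section Carry

/-- Whether the `k` least significant bits of `n` are all equal to `c`: for `c = true` these are the
numbers whose increment carries into bit `k`, for `c = false` those whose decrement borrows from
it. -/
def lowBitsEq (c : Bool) (n k : ℕ) : Bool :=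
  decide (∀ m < k, n.testBit m = c)

theorem lowBitsEq_iff_forall_testBit {c : Bool} {n k : ℕ} :
    lowBitsEq c n k = true ↔ ∀ m < k, n.testBit m = c :=
  decide_eq_true_iff

@[simp]
theorem lowBitsEq_zero (c : Bool) (n : ℕ) : lowBitsEq c n 0 = true := by
  simp [lowBitsEq]

theorem lowBitsEq_succ (c : Bool) (n k : ℕ) :
    lowBitsEq c n (k + 1) = (lowBitsEq c n k && n.testBit k == c) := by
  rw [Bool.eq_iff_iff]
  simp only [lowBitsEq_iff_forall_testBit, Nat.forall_lt_succ_right, Bool.and_eq_true, beq_iff_eq]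

theorem lowBitsEq_succ_div_two (c : Bool) (n k : ℕ) :
    lowBitsEq c n (k + 1) = (n.testBit 0 == c && lowBitsEq c (n / 2) k) := by
  rw [Bool.eq_iff_iff]
  simp only [lowBitsEq_iff_forall_testBit, Nat.forall_lt_succ_left, Nat.testBit_add_one,
    Bool.and_eq_true, beq_iff_eq]

theorem lowBitsEq_min_succ (c : Bool) (n i j : ℕ) :
    lowBitsEq c n (min i (j + 1)) =
      (lowBitsEq c n (min i j) && (decide (i ≤ j) || n.testBit j == c)) := by
  rcases le_or_gt i j with hij | hji
  · simp [hij, hij.trans j.le_succ]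
  · simp [hji.le, Nat.succ_le_of_lt hji, hji.not_ge, lowBitsEq_succ]

theorem testBit_add_one_eq_xor (n k : ℕ) :
    (n + 1).testBit k = (n.testBit k ^^ lowBitsEq true n k) := by
  induction k generalizing n with
  | zero => rcases n.mod_two_eq_zero_or_one with h | h <;> simp [Nat.add_mod, h]
  | succ k ih =>
    rw [lowBitsEq_succ_div_two, Nat.testBit_add_one, Nat.testBit_add_one]
    rcases n.even_or_odd' with ⟨m, rfl | rfl⟩
    · simp [show (2 * m + 1) / 2 = m by lia]
    · simp [show (2 * m + 1) / 2 = m by lia, show (2 * m + 1 + 1) / 2 = m + 1 by lia, ih]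

theorem lowBitsEq_false_add_one (n k : ℕ) :
    lowBitsEq false (n + 1) k = lowBitsEq true n k := by
  induction k with
  | zero => simp
  | succ k ih =>
    rw [lowBitsEq_succ, lowBitsEq_succ, ih, testBit_add_one_eq_xor]
    cases n.testBit k <;> cases lowBitsEq true n k <;> rfl

theorem testBit_eq_add_one_xor (n k : ℕ) :
    n.testBit k = ((n + 1).testBit k ^^ lowBitsEq false (n + 1) k) := by
  rw [lowBitsEq_false_add_one, testBit_add_one_eq_xor, Bool.xor_assoc, Bool.xor_self,
    Bool.xor_false]

theorem eq_of_forall_lt_testBit_eq {m n ℓ : ℕ} (hm : m < 2 ^ ℓ) (hn : n < 2 ^ ℓ)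
    (h : ∀ k < ℓ, m.testBit k = n.testBit k) : m = n := by
  refine Nat.eq_of_testBit_eq fun k => ?_
  rcases lt_or_ge k ℓ with hk | hk
  · exact h k hk
  · have hpow : 2 ^ ℓ ≤ 2 ^ k := Nat.pow_le_pow_right two_pos hk
    rw [Nat.testBit_lt_two_pow (hm.trans_le hpow), Nat.testBit_lt_two_pow (hn.trans_le hpow)]

theorem forall_testBit_eq_true_iff {n ℓ : ℕ} (hn : n < 2 ^ ℓ) :
    (∀ k < ℓ, n.testBit k = true) ↔ n + 1 = 2 ^ ℓ := by
  constructor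
  · intro h
    have := eq_of_forall_lt_testBit_eq (n := 2 ^ ℓ - 1) hn (by lia)
      fun k hk => by simp [h k hk, hk]
    lia
  · intro h k hk
    simp [show n = 2 ^ ℓ - 1 by lia, hk]

theorem forall_testBit_eq_false_iff {n ℓ : ℕ} (hn : n < 2 ^ ℓ) :
    (∀ k < ℓ, n.testBit k = false) ↔ n = 0 := by
  constructor
  · exact fun h => eq_of_forall_lt_testBit_eq hn (by positivity) (by simpa using h)
  · rintro rfl k -
    exact Nat.zero_testBit k

theorem carry_out_iff {n k ℓ : ℕ} (hk : k + 1 = ℓ) (hn : n < 2 ^ ℓ) :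
    n.testBit k = true ∧ lowBitsEq true n k = true ↔ n + 1 = 2 ^ ℓ := by
  subst hk
  rw [← forall_testBit_eq_true_iff hn, ← lowBitsEq_iff_forall_testBit, lowBitsEq_succ,
    Bool.and_eq_true, beq_iff_eq, and_comm]

theorem borrow_out_iff {n k ℓ : ℕ} (hk : k + 1 = ℓ) (hn : n < 2 ^ ℓ) :
    n.testBit k = false ∧ lowBitsEq false n k = true ↔ n = 0 := by
  subst hk
  rw [← forall_testBit_eq_false_iff hn, ← lowBitsEq_iff_forall_testBit, lowBitsEq_succ,
    Bool.and_eq_true, beq_iff_eq, and_comm]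

end Carry

section Counter

variable {Γ : Type*} {ℓ : ℕ}

/-- `IsCounterWord ℓ n j w`: the word `w` completes a trace of an `ℓ`-bit counter, from the moment
when the current value is `n` and `j` bits of its block have been read, and the final value is `0`.
Blocks are written with the least significant bit first. The counter must not overflow or underflow,
and letters of `Γ` may only be read at its maximal value. -/
def IsCounterWord (ℓ : ℕ) : ℕ → ℕ → List (CtrSym Γ) → Prop
  | n, j, [] => j = ℓ ∧ n = 0
  | n, j, .bit x :: w => (j < ℓ ∧ n.testBit j = x) ∧ IsCounterWord ℓ n (j + 1) w
  | n, j, .inc :: w => (j = ℓ ∧ n + 1 < 2 ^ ℓ) ∧ IsCounterWord ℓ (n + 1) 0 w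
  | n, j, .dec :: w => (j = ℓ ∧ 0 < n) ∧ IsCounterWord ℓ (n - 1) 0 w
  | n, j, .letter _ :: w => (j = ℓ ∧ n + 1 = 2 ^ ℓ) ∧ IsCounterWord ℓ n 0 w

/-- The memory of the automaton responsible for bit `i` of an `ℓ`-bit counter: how many bits of the
current block have been read, the value that bit `i` must have in it, and whether all bits of the
block read so far at positions below `i` are `1`, respectively `0`. -/
structure BitState (ℓ : ℕ) where
  pos : Fin (ℓ + 1)
  bit : Bool
  ones : Bool
  zeros : Bool
deriving Fintype

theorem BitState.card (ℓ : ℕ) : Fintype.card (BitState ℓ) = 8 * (ℓ + 1) := by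
  let toProd : BitState ℓ ≃ Fin (ℓ + 1) × Bool × Bool × Bool :=
    { toFun := fun s => (s.pos, s.bit, s.ones, s.zeros)
      invFun := fun p => ⟨p.1, p.2.1, p.2.2.1, p.2.2.2⟩ }
  rw [Fintype.card_congr toProd]
  simp only [Fintype.card_prod, Fintype.card_fin, Fintype.card_bool]
  ring

/-- The state at the beginning of a block in which bit `i` must be `b`. -/
def BitState.init (b : Bool) : BitState ℓ :=
  ⟨0, b, true, true⟩

/-- The partial transition function of the automaton responsible for bit `i`. A carry out of the
counter is noticed only by the automaton of the most significant bit. -/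
def BitState.step (i : Fin ℓ) (s : BitState ℓ) : CtrSym Γ → Option (BitState ℓ)
  | .bit x =>
    if s.pos < ℓ ∧ (s.pos = i.val → x = s.bit) then
      some ⟨s.pos + 1, s.bit,
        s.ones && (decide (i.val ≤ s.pos) || x == true),
        s.zeros && (decide (i.val ≤ s.pos) || x == false)⟩
    else none
  | .inc =>
    if s.pos = ℓ ∧ ¬(i + 1 = ℓ ∧ s.bit = true ∧ s.ones = true) then
      some (.init (s.bit ^^ s.ones))
    else none
  | .dec =>
    if s.pos = ℓ ∧ ¬(i + 1 = ℓ ∧ s.bit = false ∧ s.zeros = true) then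
      some (.init (s.bit ^^ s.zeros))
    else none
  | .letter _ => if s.pos = ℓ ∧ s.bit = true then some (.init s.bit) else none

/-- The state that the automaton of bit `i` should have reached when the counter value is `n` and
`j` bits of its block have been read. -/
def BitState.ofCounter (i : Fin ℓ) (n : ℕ) (j : Fin (ℓ + 1)) : BitState ℓ :=
  ⟨j, n.testBit i, lowBitsEq true n (min i j), lowBitsEq false n (min i j)⟩

theorem BitState.ofCounter_zero (i : Fin ℓ) (n : ℕ) :
    BitState.ofCounter i n 0 = .init (n.testBit i) := by
  simp [ofCounter, init]

/-- The automaton responsible for bit `i`; it checks that this bit is `0` in the first and the last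
block. -/
def bitDFA (Γ : Type*) (i : Fin ℓ) : DFA (CtrSym Γ) (Option (BitState ℓ)) :=
  totalDFA (BitState.step i) (.init false) {s | s.pos = ℓ ∧ s.bit = false}

theorem exists_fin_val_add_one_eq (hℓ : 0 < ℓ) : ∃ i : Fin ℓ, i + 1 = ℓ :=
  ⟨⟨ℓ - 1, Nat.sub_one_lt_of_lt hℓ⟩, Nat.sub_add_cancel hℓ⟩

namespace BitState

theorem step_bit_ofCounter (i : Fin ℓ) {n : ℕ} {j : Fin (ℓ + 1)} {x : Bool}
    (h : j < ℓ ∧ n.testBit j = x) :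
    step (Γ := Γ) i (ofCounter i n j) (.bit x) = some (ofCounter i n (j + 1)) := by
  obtain ⟨hj, rfl⟩ := h
  have expected : (j : ℕ) = i → n.testBit j = n.testBit i := congrArg n.testBit
  simp only [step, ofCounter, Fin.val_add_one_of_lt hj, lowBitsEq_min_succ]
  exact if_pos ⟨hj, expected⟩

theorem step_bit_ofCounter_eq_none {n : ℕ} {j : Fin (ℓ + 1)} {x : Bool} (hℓ : 0 < ℓ)
    (h : ¬(j < ℓ ∧ n.testBit j = x)) :
    ∃ i : Fin ℓ, step (Γ := Γ) i (ofCounter i n j) (.bit x) = none := by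
  by_cases hj : j < ℓ
  · exact ⟨⟨j, hj⟩, if_neg fun hx => h ⟨hj, (hx.2 rfl).symm⟩⟩
  · exact ⟨⟨0, hℓ⟩, if_neg fun hx => hj hx.1⟩

theorem step_inc_ofCounter (i : Fin ℓ) {n : ℕ} {j : Fin (ℓ + 1)} (h : j = ℓ ∧ n + 1 < 2 ^ ℓ) :
    step (Γ := Γ) i (ofCounter i n j) .inc = some (ofCounter i (n + 1) 0) := by
  have hn : n < 2 ^ ℓ := by lia
  have no_overflow : ¬(i + 1 = ℓ ∧ n.testBit i = true ∧ lowBitsEq true n i = true) :=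
    fun ⟨hi, ho⟩ => h.2.ne ((carry_out_iff hi hn).1 ho)
  rw [ofCounter_zero, testBit_add_one_eq_xor]
  simp only [step, ofCounter, h.1, min_eq_left i.2.le, true_and]
  exact if_pos no_overflow

theorem step_dec_ofCounter (i : Fin ℓ) {n : ℕ} {j : Fin (ℓ + 1)} (hn : n < 2 ^ ℓ)
    (h : j = ℓ ∧ 0 < n) :
    step (Γ := Γ) i (ofCounter i n j) .dec = some (ofCounter i (n - 1) 0) := by
  have no_underflow : ¬(i + 1 = ℓ ∧ n.testBit i = false ∧ lowBitsEq false n i = true) :=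
    fun ⟨hi, hu⟩ => h.2.ne' ((borrow_out_iff hi hn).1 hu)
  rw [ofCounter_zero, testBit_eq_add_one_xor, Nat.sub_add_cancel h.2]
  simp only [step, ofCounter, h.1, min_eq_left i.2.le, true_and]
  exact if_pos no_underflow

theorem step_letter_ofCounter (i : Fin ℓ) {n : ℕ} {j : Fin (ℓ + 1)} (g : Γ)
    (h : j = ℓ ∧ n + 1 = 2 ^ ℓ) :
    step i (ofCounter i n j) (.letter g) = some (ofCounter i n 0) := by
  have hbit : n.testBit i = true := (forall_testBit_eq_true_iff (by lia)).2 h.2 i i.2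
  rw [ofCounter_zero]
  exact if_pos ⟨h.1, hbit⟩

theorem step_inc_ofCounter_eq_none {n : ℕ} {j : Fin (ℓ + 1)} (hℓ : 0 < ℓ) (hn : n < 2 ^ ℓ)
    (h : ¬(j = ℓ ∧ n + 1 < 2 ^ ℓ)) :
    ∃ i : Fin ℓ, step (Γ := Γ) i (ofCounter i n j) .inc = none := by
  obtain ⟨i, hi⟩ := exists_fin_val_add_one_eq hℓ
  refine ⟨i, if_neg fun ⟨hj, no_overflow⟩ => no_overflow ⟨hi, ?_⟩⟩
  simp only [ofCounter] at hj ⊢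
  rw [hj, min_eq_left i.2.le, carry_out_iff hi hn]
  lia

theorem step_dec_ofCounter_eq_none {n : ℕ} {j : Fin (ℓ + 1)} (hℓ : 0 < ℓ) (hn : n < 2 ^ ℓ)
    (h : ¬(j = ℓ ∧ 0 < n)) :
    ∃ i : Fin ℓ, step (Γ := Γ) i (ofCounter i n j) .dec = none := by
  obtain ⟨i, hi⟩ := exists_fin_val_add_one_eq hℓ
  refine ⟨i, if_neg fun ⟨hj, no_underflow⟩ => no_underflow ⟨hi, ?_⟩⟩
  simp only [ofCounter] at hj ⊢
  rw [hj, min_eq_left i.2.le, borrow_out_iff hi hn]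
  lia

theorem step_letter_ofCounter_eq_none {n : ℕ} {j : Fin (ℓ + 1)} (g : Γ) (hℓ : 0 < ℓ)
    (hn : n < 2 ^ ℓ) (h : ¬(j = ℓ ∧ n + 1 = 2 ^ ℓ)) :
    ∃ i : Fin ℓ, step i (ofCounter i n j) (.letter g) = none := by
  by_cases hj : j = ℓ
  · have not_all_ones : ¬∀ k < ℓ, n.testBit k = true := fun hall =>
      h ⟨hj, (forall_testBit_eq_true_iff hn).1 hall⟩
    push Not at not_all_ones
    obtain ⟨k, hk, hbit⟩ := not_all_ones
    exact ⟨⟨k, hk⟩, if_neg fun hs => hbit hs.2⟩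
  · exact ⟨⟨0, hℓ⟩, if_neg fun hs => hj hs.1⟩

theorem forall_ofCounter_accept_iff {n : ℕ} {j : Fin (ℓ + 1)} (hℓ : 0 < ℓ) (hn : n < 2 ^ ℓ) :
    (∀ i : Fin ℓ, (ofCounter i n j).pos = ℓ ∧ (ofCounter i n j).bit = false) ↔ j = ℓ ∧ n = 0 := by
  rw [← forall_testBit_eq_false_iff hn]
  exact ⟨fun h => ⟨(h ⟨0, hℓ⟩).1, fun k hk => (h ⟨k, hk⟩).2⟩, fun h i => ⟨h.1, h.2 i i.2⟩⟩

end BitState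

open BitState in
theorem forall_mem_acceptsFrom_bitDFA_iff (hℓ : 0 < ℓ) (w : List (CtrSym Γ)) {n : ℕ}
    (hn : n < 2 ^ ℓ) (j : Fin (ℓ + 1)) :
    (∀ i : Fin ℓ, w ∈ (bitDFA Γ i).acceptsFrom (some (ofCounter i n j))) ↔
      IsCounterWord ℓ n j w := by
  induction w generalizing n j with
  | nil =>
    simpa [bitDFA, totalDFA, DFA.mem_acceptsFrom, IsCounterWord] using
      forall_ofCounter_accept_iff hℓ hn
  | cons a w ih =>
    cases a with
    | bit x =>
      refine (forall_cons_mem_acceptsFrom_totalDFA_iff (fun h i => step_bit_ofCounter i h)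
        (step_bit_ofCounter_eq_none hℓ)).trans (and_congr_right fun h => ?_)
      rw [← Fin.val_add_one_of_lt h.1]
      exact ih hn (j + 1)
    | inc =>
      exact (forall_cons_mem_acceptsFrom_totalDFA_iff (fun h i => step_inc_ofCounter i h)
        (step_inc_ofCounter_eq_none hℓ hn)).trans (and_congr_right fun h => ih h.2 0)
    | dec =>
      exact (forall_cons_mem_acceptsFrom_totalDFA_iff (fun h i => step_dec_ofCounter i hn h)
        (step_dec_ofCounter_eq_none hℓ hn)).trans
          (and_congr_right fun _ => ih ((n.sub_le 1).trans_lt hn) 0)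
    | letter g =>
      exact (forall_cons_mem_acceptsFrom_totalDFA_iff (fun h i => step_letter_ofCounter i g h)
        (step_letter_ofCounter_eq_none g hℓ hn)).trans (and_congr_right fun _ => ih hn 0)

theorem forall_mem_accepts_bitDFA_iff (hℓ : 0 < ℓ) (w : List (CtrSym Γ)) :
    (∀ i : Fin ℓ, w ∈ (bitDFA Γ i).accepts) ↔ IsCounterWord ℓ 0 0 w := by
  simpa [BitState.ofCounter_zero] using!
    forall_mem_acceptsFrom_bitDFA_iff hℓ w (Nat.two_pow_pos ℓ) 0

end Counter

section Words

variable {Γ : Type*} {ℓ : ℕ}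

/-- The `ℓ` bits of `n` as letters, least significant bit first. -/
def counterBlock (Γ : Type*) (ℓ n : ℕ) : List (CtrSym Γ) :=
  (List.range ℓ).map fun k => .bit (n.testBit k)

/-- A trace of the traversal of a complete binary tree of depth `d` by a counter with initial and
final value `n`, in which the letter `g` is read twice at each leaf. -/
def treeWord (ℓ : ℕ) (g : Γ) : ℕ → ℕ → List (CtrSym Γ)
  | n, 0 =>
    let visit := .letter g :: counterBlock Γ ℓ n
    visit ++ visit
  | n, d + 1 =>
    let branch := .inc :: (counterBlock Γ ℓ (n + 1) ++
      (treeWord ℓ g (n + 1) d ++ .dec :: counterBlock Γ ℓ n))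
    branch ++ branch

theorem isCounterWord_bits_append {n j m : ℕ} (w : List (CtrSym Γ)) (h : j + m = ℓ)
    (hw : IsCounterWord ℓ n ℓ w) :
    IsCounterWord ℓ n j ((List.range' j m).map (fun k => .bit (n.testBit k)) ++ w) := by
  induction m generalizing j with
  | zero => exact (show j = ℓ from h) ▸ hw
  | succ m ih => exact ⟨⟨by lia, rfl⟩, ih (by lia)⟩

theorem isCounterWord_counterBlock_append {n : ℕ} {w : List (CtrSym Γ)}
    (hw : IsCounterWord ℓ n ℓ w) : IsCounterWord ℓ n 0 (counterBlock Γ ℓ n ++ w) := by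
  rw [counterBlock, List.range_eq_range']
  exact isCounterWord_bits_append w (zero_add ℓ) hw

theorem isCounterWord_treeWord_append (g : Γ) {n d : ℕ} {w : List (CtrSym Γ)}
    (h : n + d + 1 = 2 ^ ℓ) (hw : IsCounterWord ℓ n ℓ w) :
    IsCounterWord ℓ n ℓ (treeWord ℓ g n d ++ w) := by
  induction d generalizing n w with
  | zero =>
    have visit {w} (hw : IsCounterWord ℓ n ℓ w) :
        IsCounterWord ℓ n ℓ (.letter g :: (counterBlock Γ ℓ n ++ w)) :=
      ⟨⟨rfl, h⟩, isCounterWord_counterBlock_append hw⟩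
    simpa [treeWord] using visit (visit hw)
  | succ d ih =>
    have ascend {w} (hw : IsCounterWord ℓ n ℓ w) :
        IsCounterWord ℓ (n + 1) ℓ (.dec :: (counterBlock Γ ℓ n ++ w)) :=
      ⟨⟨rfl, n.succ_pos⟩, isCounterWord_counterBlock_append hw⟩
    have branch {w} (hw : IsCounterWord ℓ n ℓ w) :
        IsCounterWord ℓ n ℓ (.inc :: (counterBlock Γ ℓ (n + 1) ++
          (treeWord ℓ g (n + 1) d ++ .dec :: (counterBlock Γ ℓ n ++ w)))) :=
      ⟨⟨rfl, by lia⟩, isCounterWord_counterBlock_append (ih (by lia) (ascend hw))⟩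
    simpa [treeWord] using branch (branch hw)

end Words

section Pushdown

variable {Q S σ Γ : Type*}

/-- The words that lead a pushdown automaton from a configuration to acceptance. -/
def PDA.acceptsFrom (P : PDA Q S σ) (c : Q × List S) : Set (List σ) :=
  {w | ∃ f ∈ P.final, ∃ h, P.Steps c w (f, []) h}

theorem PDA.cons_mem_acceptsFrom {P : PDA Q S σ} {q q' : Q} {a : σ} {op : StackOp S}
    {s s' : List S} {w : List σ} (ht : (q, some a, op, q') ∈ P.trans) (hop : op.apply s s')
    (hw : w ∈ P.acceptsFrom (q', s')) : a :: w ∈ P.acceptsFrom (q, s) := by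
  obtain ⟨f, hf, h, hs⟩ := hw
  exact ⟨f, hf, _, .step ht hop hs⟩

/-- The transitions of the automaton that traverses a binary tree, with its position as the stack.
State `0` is about to enter a subtree, `1` has left one, and `2` is between the two halves of one;
the stack symbol tells whether the current subtree is a left (`0`) or a right (`1`) child. At a leaf
the two halves are two letters. -/
inductive TreeTrans (Γ : Type*) : Fin 3 × Option (CtrSym Γ) × StackOp (Fin 2) × Fin 3 → Prop
  | bit (q : Fin 3) (b : Bool) : TreeTrans Γ (q, some (.bit b), .nop, q)
  | enterLeft : TreeTrans Γ (0, some .inc, .push 0, 0)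
  | leaveLeft : TreeTrans Γ (1, some .dec, .pop 0, 2)
  | enterRight : TreeTrans Γ (2, some .inc, .push 1, 0)
  | leaveRight : TreeTrans Γ (1, some .dec, .pop 1, 1)
  | firstLetter (g : Γ) : TreeTrans Γ (0, some (.letter g), .nop, 2)
  | secondLetter (g : Γ) : TreeTrans Γ (2, some (.letter g), .nop, 1)

/-- The automaton that traverses a binary tree whose depth it does not control. -/
def treePDA (Γ : Type*) : PDA (Fin 3) (Fin 2) (CtrSym Γ) where
  trans := {t | TreeTrans Γ t}
  start := 0
  final := {1}

theorem counterBlock_append_mem_acceptsFrom {w : List (CtrSym Γ)} {c : Fin 3 × List (Fin 2)}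
    (ℓ n : ℕ) (hw : w ∈ (treePDA Γ).acceptsFrom c) :
    counterBlock Γ ℓ n ++ w ∈ (treePDA Γ).acceptsFrom c := by
  rw [counterBlock]
  induction List.range ℓ with
  | nil => exact hw
  | cons k ks ih => exact PDA.cons_mem_acceptsFrom (.bit c.1 _) rfl ih

theorem treeWord_append_mem_acceptsFrom (ℓ : ℕ) (g : Γ) (n d : ℕ) {s : List (Fin 2)}
    {w : List (CtrSym Γ)} (hw : w ∈ (treePDA Γ).acceptsFrom (1, s)) :
    treeWord ℓ g n d ++ w ∈ (treePDA Γ).acceptsFrom (0, s) := by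
  induction d generalizing n s w with
  | zero =>
    have visit {q q' : Fin 3} {w} (ht : TreeTrans Γ (q, some (.letter g), .nop, q'))
        (hw : w ∈ (treePDA Γ).acceptsFrom (q', s)) :
        .letter g :: (counterBlock Γ ℓ n ++ w) ∈ (treePDA Γ).acceptsFrom (q, s) :=
      PDA.cons_mem_acceptsFrom ht rfl (counterBlock_append_mem_acceptsFrom ℓ n hw)
    simpa [treeWord] using visit (.firstLetter g) (visit (.secondLetter g) hw)
  | succ d ih =>
    have branch {q q' : Fin 3} {x : Fin 2} {w} (enter : TreeTrans Γ (q, some .inc, .push x, 0))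
        (leave : TreeTrans Γ (1, some .dec, .pop x, q'))
        (hw : w ∈ (treePDA Γ).acceptsFrom (q', s)) :
        .inc :: (counterBlock Γ ℓ (n + 1) ++ (treeWord ℓ g (n + 1) d ++
          .dec :: (counterBlock Γ ℓ n ++ w))) ∈ (treePDA Γ).acceptsFrom (q, s) :=
      PDA.cons_mem_acceptsFrom enter rfl <| counterBlock_append_mem_acceptsFrom ℓ (n + 1) <|
        ih (n + 1) <| PDA.cons_mem_acceptsFrom leave rfl <|
          counterBlock_append_mem_acceptsFrom ℓ n hw
    simpa [treeWord] using branch .enterLeft .leaveLeft (branch .enterRight .leaveRight hw)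

/-- The number of letters still to be read after leaving the subtree at the position given by the
stack, when all leaves have depth `H - 1`: each ancestor entered to the left still has a right
sibling. -/
def pendingAbove (H : ℕ) : List (Fin 2) → ℕ
  | [] => 0
  | 0 :: s => 2 ^ (H - (s.length + 1)) + pendingAbove H s
  | 1 :: s => pendingAbove H s

/-- The number of letters still to be read within a subtree whose root has depth `n`, depending on
the state of the automaton, when all leaves have depth `H - 1`. -/
def pendingBelow (H n : ℕ) : Fin 3 → ℕ
  | 0 => 2 ^ (H - n)
  | 1 => 0
  | 2 => 2 ^ (H - (n + 1))

/-- The number of letters still to be read from a configuration of `treePDA`, when all leaves have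
depth `H - 1`. -/
def pendingLetters (H : ℕ) (c : Fin 3 × List (Fin 2)) : ℕ :=
  pendingBelow H c.2.length c.1 + pendingAbove H c.2

namespace TreeTrans

variable {ℓ j : ℕ} {q q' : Fin 3} {a : Option (CtrSym Γ)} {op : StackOp (Fin 2)}
  {s s' : List (Fin 2)} {w : List (CtrSym Γ)}

-- The stack height follows the counter value.
theorem exists_isCounterWord (ht : TreeTrans Γ (q, a, op, q')) (hop : op.apply s s')
    (hw : IsCounterWord ℓ s.length j (a.toList ++ w)) :
    ∃ j', IsCounterWord ℓ s'.length j' w := by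
  cases ht <;> cases hop <;> exact ⟨_, hw.2⟩

theorem pendingLetters_eq (ht : TreeTrans Γ (q, a, op, q')) (hop : op.apply s s')
    (hw : IsCounterWord ℓ s.length j (a.toList ++ w)) :
    pendingLetters (2 ^ ℓ) (q, s) =
      (projLetters a.toList).length + pendingLetters (2 ^ ℓ) (q', s') := by
  cases ht <;> cases hop
  case enterLeft =>
    have not_leaf : s.length + 1 < 2 ^ ℓ := hw.1.2
    have halve : 2 ^ (2 ^ ℓ - s.length) = 2 * 2 ^ (2 ^ ℓ - (s.length + 1)) := by
      rw [← pow_succ']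
      congr 1
      lia
    simp [pendingLetters, pendingBelow, pendingAbove, projLetters, halve, two_mul, add_assoc]
  case firstLetter =>
    have leaf : s.length + 1 = 2 ^ ℓ := hw.1.2
    simp [pendingLetters, pendingBelow, projLetters, ← leaf, ← add_assoc]
  case secondLetter =>
    have leaf : s.length + 1 = 2 ^ ℓ := hw.1.2
    simp [pendingLetters, pendingBelow, projLetters, leaf]
  all_goals simp [pendingLetters, pendingBelow, pendingAbove, projLetters]

end TreeTrans

theorem length_projLetters_of_steps {ℓ j h : ℕ} {c : Fin 3 × List (Fin 2)} {w : List (CtrSym Γ)}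
    (hs : (treePDA Γ).Steps c w (1, []) h) (hw : IsCounterWord ℓ c.2.length j w) :
    (projLetters w).length = pendingLetters (2 ^ ℓ) c := by
  generalize hc : ((1, []) : Fin 3 × List (Fin 2)) = c' at hs
  induction hs generalizing j with
  | refl c => simp [← hc, projLetters, pendingLetters, pendingAbove, pendingBelow]
  | step ht hop _ ih =>
    obtain ⟨j', hw'⟩ := TreeTrans.exists_isCounterWord ht hop hw
    rw [TreeTrans.pendingLetters_eq ht hop hw, ← ih hw' hc, projLetters, List.filterMap_append,
      List.length_append]
    rfl

end Pushdown

/-- there is a constant `c` such that for every `ℓ ≥ 1` there are a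
PDA with 3 states and 2 stack symbols and `ℓ` DFAs with at most `c·ℓ` states each,
such that every word in the intersection of their languages projects to a word over
`Γ₂` of length exactly `2^(2^ℓ)`, and such a word exists. -/
theorem exists_pda_dfas_double_exponential :
    ∃ c : ℕ, ∀ ℓ : ℕ, 1 ≤ ℓ → ∀ Γ : Type, Nonempty Γ →
      ∃ (A : PDA (Fin 3) (Fin 2) (CtrSym Γ)) (Bs : Fin ℓ → DFA (CtrSym Γ) (Fin (c * ℓ))),
        (∀ w : List (CtrSym Γ), w ∈ A.language → (∀ i, w ∈ (Bs i).accepts) →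
          (projLetters w).length = 2 ^ (2 ^ ℓ)) ∧
        ∃ w : List (CtrSym Γ), w ∈ A.language ∧ ∀ i, w ∈ (Bs i).accepts := by
  refine ⟨17, fun ℓ hℓ Γ ⟨g⟩ => ?_⟩
  have card_le : Fintype.card (Option (BitState ℓ)) ≤ 17 * ℓ := by
    rw [Fintype.card_option, BitState.card]
    lia
  choose Bs hBs using fun i : Fin ℓ => exists_dfa_fin_accepts_eq (bitDFA Γ i) card_le
  refine ⟨treePDA Γ, Bs, ?_⟩
  simp only [hBs, forall_mem_accepts_bitDFA_iff hℓ]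
  constructor
  · rintro w ⟨f, rfl, h, hs⟩ hw
    simpa [pendingLetters, pendingAbove, pendingBelow, treePDA] using
      length_projLetters_of_steps hs hw
  · have hdepth : 0 + (2 ^ ℓ - 1) + 1 = 2 ^ ℓ := by have := Nat.two_pow_pos ℓ; lia
    have nil_mem : [] ∈ (treePDA Γ).acceptsFrom (1, []) := ⟨1, rfl, 0, .refl _⟩
    refine ⟨counterBlock Γ ℓ 0 ++ (treeWord ℓ g 0 (2 ^ ℓ - 1) ++ []), ?_, ?_⟩
    · exact counterBlock_append_mem_acceptsFrom ℓ 0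
        (treeWord_append_mem_acceptsFrom ℓ g 0 _ nil_mem)
    · exact isCounterWord_counterBlock_append (isCounterWord_treeWord_append g hdepth ⟨rfl, rfl⟩)
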